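/- arXiv:1409.2333 — 2 statements merged into one kernel-verified Lean document; each statement's English description precedes it below -/
import Mathlib

section
/- Let n ≥ 1 and θ ∈ (0,π) with θ ≠ π/2. If (x,y) ∈ ℝ² is a critical zero of Φ^θ_n, then H_{n−1}(x) = 0 and H_{n−1}(y) = 0 and cos θ · H_n(x) + sin θ · H_n(y) = 0. Consequently, the set of θ ∈ [0,π) for which Φ^θ_n has at least one critical zero is finite. -/
/-- The physicist's Hermite polynomials: `H 0 = 1`, `H 1 = 2X`,
`H (n+2) = 2X · H (n+1) - 2(n+1) · H n`. -/
noncomputable def H : ℕ → Polynomial ℝ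
  | 0 => 1
  | 1 => Polynomial.C 2 * Polynomial.X
  | n + 2 => Polynomial.C 2 * Polynomial.X * H (n + 1) - Polynomial.C (2 * (n + 1) : ℝ) * H n

/-- The eigenfunction `Φ^θ_n(x,y) = (cos θ · H_n(x) + sin θ · H_n(y)) e^{-(x²+y²)/2}`. -/
noncomputable def Phi (n : ℕ) (θ : ℝ) : ℝ × ℝ → ℝ := fun p =>
  (Real.cos θ * (H n).eval p.1 + Real.sin θ * (H n).eval p.2) *
    Real.exp (-(p.1 ^ 2 + p.2 ^ 2) / 2)

/-- A critical zero of `Φ^θ_n` is a point where `Φ^θ_n` and both of its first-order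
partial derivatives vanish. -/
noncomputable def IsCriticalZero (n : ℕ) (θ : ℝ) (p : ℝ × ℝ) : Prop :=
  Phi n θ p = 0 ∧
  deriv (fun x => Phi n θ (x, p.2)) p.1 = 0 ∧
  deriv (fun y => Phi n θ (p.1, y)) p.2 = 0

theorem H_deriv : ∀ n : ℕ, Polynomial.derivative (H (n + 1)) =
    Polynomial.C (2 * (n + 1) : ℝ) * H n
  | 0 => by simp [H]
  | 1 => by
    simp only [H, Polynomial.derivative_sub, Polynomial.derivative_mul, Polynomial.derivative_C,
      Polynomial.derivative_X, Polynomial.derivative_one]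
    simp only [map_mul, map_add, Polynomial.C_1, Nat.cast_zero, Nat.cast_one, map_zero]
    ring
  | n + 2 => by
    have h1 := H_deriv n
    have h2 := H_deriv (n + 1)
    have e : H (n + 2 + 1) = Polynomial.C 2 * Polynomial.X * H (n + 2)
      - Polynomial.C (2 * (((n + 1 : ℕ) : ℝ) + 1)) * H (n + 1) := by rw [H]
    have e2 : H (n + 2) = Polynomial.C 2 * Polynomial.X * H (n + 1)
      - Polynomial.C (2 * ((n : ℝ) + 1)) * H n := by rw [H]
    rw [e]
    simp only [Polynomial.derivative_sub, Polynomial.derivative_mul, Polynomial.derivative_C,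
      Polynomial.derivative_X, h1]
    rw [show n + 2 = n + 1 + 1 from rfl, h2]
    rw [show n + 1 + 1 = n + 2 from rfl, e2]
    simp only [map_mul, map_add, Polynomial.C_1, Nat.cast_add, Nat.cast_one, Nat.cast_ofNat,
      Polynomial.C_ofNat]
    ring

theorem H_ne_zero : ∀ n : ℕ, H n ≠ 0
  | 0 => by simp [H]
  | n + 1 => by
    intro h
    have h1 := H_deriv n
    rw [h, Polynomial.derivative_zero] at h1
    rcases mul_eq_zero.1 h1.symm with h2 | h2
    · rw [Polynomial.C_eq_zero] at h2
      have : (0 : ℝ) ≤ n := n.cast_nonneg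
      linarith
    · exact H_ne_zero n h2

theorem H_no_common (x : ℝ) : ∀ n : ℕ, (H n).eval x = 0 → (H (n + 1)).eval x ≠ 0
  | 0 => by simp [H]
  | n + 1 => by
    intro h h'
    rw [show n + 1 + 1 = n + 2 from rfl, H] at h'
    simp only [Polynomial.eval_sub, Polynomial.eval_mul, Polynomial.eval_C, h] at h'
    have hp : (0 : ℝ) ≤ n := n.cast_nonneg
    have h0 : (H n).eval x = 0 := by
      have : (2 * ((n : ℝ) + 1)) * (H n).eval x = 0 := by linarith
      rcases mul_eq_zero.1 this with h2 | h2
      · linarith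
      · exact h2
    exact H_no_common x n h0 h

theorem deriv_aux (P : Polynomial ℝ) (a b c x : ℝ) (h0 : a * P.eval x + b = 0)
    (h : deriv (fun t => (a * P.eval t + b) * Real.exp (-(t ^ 2 + c) / 2)) x = 0) :
    a * P.derivative.eval x = 0 := by
  have h1 : HasDerivAt (fun t => a * P.eval t + b) (a * P.derivative.eval x) x :=
    ((P.hasDerivAt x).const_mul a).add_const b
  have h2 : DifferentiableAt ℝ (fun t : ℝ => Real.exp (-(t ^ 2 + c) / 2)) x := by fun_prop
  have h3 := (h1.mul h2.hasDerivAt).deriv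
  rw [h0, zero_mul, add_zero] at h3
  have h4 := h3.symm.trans h
  exact (mul_eq_zero.1 h4).resolve_right (Real.exp_ne_zero _)

theorem crit_aux (m : ℕ) (θ x y : ℝ) (h : IsCriticalZero (m + 1) θ (x, y)) :
    Real.cos θ * (H m).eval x = 0 ∧ Real.sin θ * (H m).eval y = 0 ∧
      Real.cos θ * (H (m + 1)).eval x + Real.sin θ * (H (m + 1)).eval y = 0 := by
  obtain ⟨h0, h1, h2⟩ := h
  have h0' := (mul_eq_zero.1 h0).resolve_right (Real.exp_ne_zero _)
  simp only at h0' h1 h2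
  have hp : (0 : ℝ) ≤ m := m.cast_nonneg
  have hm : (2 * ((m : ℝ) + 1)) ≠ 0 := by positivity
  have k1 := deriv_aux (H (m + 1)) _ _ (y ^ 2) x h0' h1
  have k2 := deriv_aux (H (m + 1)) (Real.sin θ) (Real.cos θ * (H (m + 1)).eval x) (x ^ 2) y
    (by linarith) (by
      rw [← h2]; congr 1; funext t; simp only [Phi]
      rw [add_comm (t ^ 2), add_comm (Real.sin θ * _)])
  rw [H_deriv, Polynomial.eval_mul, Polynomial.eval_C, mul_left_comm] at k1 k2
  exact ⟨(mul_eq_zero.1 k1).resolve_left hm, (mul_eq_zero.1 k2).resolve_left hm, h0'⟩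

theorem angle_aux (a b : ℝ) (hb : b ≠ 0) :
    {t ∈ Set.Ico (0 : ℝ) Real.pi | Real.cos t * a + Real.sin t * b = 0}.Subsingleton := by
  rintro s ⟨⟨hs0, hs1⟩, hs⟩ t ⟨⟨ht0, ht1⟩, ht⟩
  have h : Real.sin (s - t) = 0 := by
    rw [Real.sin_sub]
    apply (mul_eq_zero.1 (_ : _ * b = 0)).resolve_right hb
    linear_combination Real.cos t * hs - Real.cos s * ht
  have := (Real.sin_eq_zero_iff_of_lt_of_lt (by linarith) (by linarith)).1 h
  linarith

theorem cos_aux (t : ℝ) (h : t ∈ Set.Ico (0 : ℝ) Real.pi) (h2 : t ≠ Real.pi / 2) :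
    Real.cos t ≠ 0 := by
  intro hc
  apply h2
  apply Real.injOn_cos ⟨h.1, h.2.le⟩ ⟨by linarith [Real.pi_pos], by linarith [Real.pi_pos]⟩
  rw [hc, Real.cos_pi_div_two]

theorem finite_aux (m : ℕ) :
    {t ∈ Set.Ico (0 : ℝ) Real.pi | ∃ p : ℝ × ℝ, IsCriticalZero (m + 1) t p}.Finite := by
  have hZ : {x : ℝ | (H m).eval x = 0}.Finite := by
    refine (H m).roots.toFinset.finite_toSet.subset fun x hx => ?_
    simpa [H_ne_zero m] using hx
  refine Set.Finite.subset (s := {0, Real.pi / 2} ∪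
    ⋃ p ∈ {x : ℝ | (H m).eval x = 0} ×ˢ {x : ℝ | (H m).eval x = 0},
      {t ∈ Set.Ico (0 : ℝ) Real.pi | Real.cos t * (H (m + 1)).eval p.1
        + Real.sin t * (H (m + 1)).eval p.2 = 0}) ?_ ?_
  · refine (Set.toFinite _).union ((hZ.prod hZ).biUnion fun p hp => ?_)
    exact (angle_aux _ _ (H_no_common _ _ hp.2)).finite
  · rintro t ⟨ht, ⟨x, y⟩, hc⟩
    by_cases h0 : t = 0
    · left; simp [h0]
    by_cases h2 : t = Real.pi / 2
    · left; simp [h2]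
    right
    obtain ⟨k1, k2, k3⟩ := crit_aux m t x y hc
    have hs : Real.sin t ≠ 0 :=
      (Real.sin_pos_of_pos_of_lt_pi (lt_of_le_of_ne ht.1 (Ne.symm h0)) ht.2).ne'
    exact Set.mem_biUnion (x := (x, y)) ⟨(mul_eq_zero.1 k1).resolve_left (cos_aux t ht h2),
      (mul_eq_zero.1 k2).resolve_left hs⟩ ⟨ht, k3⟩

open Real Set in
/-- **Lemma 3.1 (critical zeros).** For `θ ∈ (0,π)`, `θ ≠ π/2`, a critical zero
`(x,y)` of `Φ^θ_n` satisfies `H_{n-1}(x) = 0`, `H_{n-1}(y) = 0` and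
`cos θ · H_n(x) + sin θ · H_n(y) = 0`; consequently the set of `θ ∈ [0,π)` for which
`Φ^θ_n` has a critical zero is finite. -/
theorem critical_zero_characterization (n : ℕ) (hn : 1 ≤ n) (θ : ℝ)
    (hθ : θ ∈ Set.Ioo 0 π) (hθ' : θ ≠ π / 2) (x y : ℝ)
    (hcz : IsCriticalZero n θ (x, y)) :
    ((H (n - 1)).eval x = 0 ∧ (H (n - 1)).eval y = 0 ∧
      Real.cos θ * (H n).eval x + Real.sin θ * (H n).eval y = 0) ∧
    {ϑ ∈ Set.Ico (0 : ℝ) π | ∃ p : ℝ × ℝ, IsCriticalZero n ϑ p}.Finite := by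
  obtain ⟨m, rfl⟩ : ∃ m, n = m + 1 := ⟨n - 1, by omega⟩
  obtain ⟨k1, k2, k3⟩ := crit_aux m θ x y hcz
  refine ⟨⟨(mul_eq_zero.1 k1).resolve_left (cos_aux θ ⟨hθ.1.le, hθ.2⟩ hθ'),
    (mul_eq_zero.1 k2).resolve_left (Real.sin_pos_of_pos_of_lt_pi hθ.1 hθ.2).ne', k3⟩,
    finite_aux m⟩
end

section
/- Let n be an odd positive integer and θ ∈ (0,π/4]. Let t_{n−1,1} be the smallest zero of H_{n−1}, and let t_{n−1,0} be the unique point in (−∞, t_{n,1}) such that H_n(t_{n−1,0}) = −H_n(t_{n−1,1}). Then for every t < t_{n−1,0}, the function y ↦ Φ^θ_n(t,y) has exactly one zero in ℝ. -/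
/-- The nodal set of `Φ^θ_n`. -/
noncomputable def nodalSet (n : ℕ) (θ : ℝ) : Set (ℝ × ℝ) := {p | Phi n θ p = 0}

/-- The number of nodal domains: the number of connected components of the
complement of the nodal set. -/
noncomputable def numNodalDomains (n : ℕ) (θ : ℝ) : ℕ :=
  {C : Set (ℝ × ℝ) | ∃ p, Phi n θ p ≠ 0 ∧
    C = connectedComponentIn {q : ℝ × ℝ | Phi n θ q ≠ 0} p}.ncard

open Polynomial in
theorem H_deriv_aux (n : ℕ) : derivative (H (n+1)) = C (2 * (n+1) : ℝ) * H n ∧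
    derivative (H n) = C 2 * X * H n - H (n+1) := by
  induction n with
  | zero => simp [H]
  | succ n ih =>
    obtain ⟨h1, h2⟩ := ih
    have e2 : derivative (H (n+1)) = C 2 * X * H (n+1) - H (n+1+1) := by
      rw [h1]
      conv_rhs => rw [H]
      ring
    refine ⟨?_, e2⟩
    rw [H]
    simp only [derivative_sub, derivative_mul, derivative_C, derivative_X, h1, h2]
    push_cast
    simp only [C_mul, C_add, C_1]
    ring

open Polynomial in
theorem H_lead (n : ℕ) : (H n).natDegree = n ∧ (H n).coeff n = 2 ^ n := by
  induction n using Nat.strong_induction_on with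
  | _ n ih =>
    match n, ih with
    | 0, _ => simp [H]
    | 1, _ =>
      have : (H 1).coeff 1 = 2 := by simp [H]
      refine ⟨?_, by simpa using this⟩
      simp only [H]
      exact natDegree_C_mul_X 2 two_ne_zero
    | n+2, ih =>
      obtain ⟨a1, a2⟩ := ih (n+1) (by omega)
      obtain ⟨b1, b2⟩ := ih n (by omega)
      have hc : (H (n+2)).coeff (n+2) = 2 ^ (n+2) := by
        rw [H, coeff_sub, coeff_C_mul, mul_assoc, coeff_C_mul, coeff_X_mul, a2,
          coeff_eq_zero_of_natDegree_lt (by omega)]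
        ring
      refine ⟨le_antisymm ?_ (le_natDegree_of_ne_zero (by rw [hc]; positivity)), hc⟩
      rw [H]
      refine (natDegree_sub_le _ _).trans (max_le ?_ ?_)
      · refine natDegree_mul_le.trans ?_
        have : (C (2:ℝ) * X).natDegree = 1 := natDegree_C_mul_X 2 two_ne_zero
        omega
      · refine (natDegree_C_mul_le _ _).trans ?_
        omega

open Polynomial in
theorem H_parity (n : ℕ) (x : ℝ) : (H n).eval (-x) = (-1) ^ n * (H n).eval x := by
  induction n using Nat.strong_induction_on with
  | _ n ih =>
    match n, ih with
    | 0, _ => simp [H]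
    | 1, _ => simp [H]
    | n+2, ih =>
      simp only [H, eval_sub, eval_mul, eval_C, eval_X, ih (n+1) (by omega), ih n (by omega)]
      ring

open Filter in
theorem H_tendsto (n : ℕ) (hn : 0 < n) : Tendsto (fun x => (H n).eval x) atTop atTop := by
  obtain ⟨h1, h2⟩ := H_lead n
  apply Polynomial.tendsto_atTop_of_leadingCoeff_nonneg
  · rw [← Polynomial.natDegree_pos_iff_degree_pos, h1]; exact hn
  · rw [Polynomial.leadingCoeff, h1, h2]; positivity

open Filter in
/-- no zeros beyond `a` implies positive beyond `a`. -/
theorem H_pos_of_no_zero (n : ℕ) (hn : 0 < n) (a : ℝ) (h : ∀ x, a < x → (H n).eval x ≠ 0)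
    (x : ℝ) (hx : a < x) : 0 < (H n).eval x := by
  by_contra hneg
  obtain ⟨y, hy1, hy2⟩ := (((H_tendsto n hn).eventually_gt_atTop 0).and
    (eventually_ge_atTop x)).exists
  obtain ⟨z, hz, hz0⟩ := intermediate_value_Icc hy2 ((H n).continuous.continuousOn (s := Set.Icc x y))
    (show (0:ℝ) ∈ Set.Icc _ _ from ⟨not_lt.mp hneg, hy1.le⟩)
  exact h z (lt_of_lt_of_le hx hz.1) hz0

open Real Set in
/-- **Lemma 3.2 (2).** Let `n` be odd, `θ ∈ (0,π/4]`, let `t 0 < ⋯ < t (n-1)` enumerate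
the zeros of `H_n` and `t' 0 < ⋯ < t' (n-2)` those of `H_{n-1}`, and let `t₀` be the
unique point in `(-∞, t_{n,1})` with `H_n(t₀) = -H_n(t_{n-1,1})`. Then for every
`s < t₀`, the function `y ↦ Φ^θ_n(s,y)` has exactly one zero in `ℝ`. -/
theorem barrier_vertical_exactly_one_zero (n : ℕ) (hodd : Odd n) (hpos : 0 < n)
    (θ : ℝ) (hθ : θ ∈ Set.Ioc 0 (π / 4))
    (t : Fin n → ℝ) (htmono : StrictMono t)
    (htzero : ∀ x : ℝ, (H n).eval x = 0 ↔ ∃ i, x = t i)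
    (t' : Fin (n - 1) → ℝ) (ht'mono : StrictMono t')
    (ht'zero : ∀ x : ℝ, (H (n - 1)).eval x = 0 ↔ ∃ i, x = t' i)
    (hn1 : 0 < n - 1)
    (t₀ : ℝ) (ht₀lt : t₀ < t ⟨0, hpos⟩)
    (ht₀eq : (H n).eval t₀ = - (H n).eval (t' ⟨0, hn1⟩))
    (s : ℝ) (hs : s < t₀) :
    ∃! y : ℝ, Phi n θ (s, y) = 0 := by
  obtain ⟨m, rfl⟩ : ∃ m, n = m + 1 := ⟨n - 1, by omega⟩
  have hm : 0 < m := hn1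
  have hmev : Even m := by
    rcases Nat.even_or_odd m with h | h
    · exact h
    · exact absurd hodd (by simpa using h.add_one)
  simp only [Nat.add_sub_cancel] at ht'zero
  have podd : ∀ x, (H (m+1)).eval (-x) = - (H (m+1)).eval x := fun x => by
    rw [H_parity, hodd.neg_one_pow]; ring
  have pev : ∀ x, (H m).eval (-x) = (H m).eval x := fun x => by
    rw [H_parity, hmev.neg_one_pow]; ring
  set b := t' ⟨0, hn1⟩ with hb
  set a := -b with ha
  have hgb : (H m).eval b = 0 := (ht'zero b).2 ⟨_, rfl⟩
  have hga : (H m).eval a = 0 := by rw [ha, pev, hgb]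
  have hbmin : ∀ x, (H m).eval x = 0 → b ≤ x := by
    intro x hx
    obtain ⟨i, rfl⟩ := (ht'zero x).1 hx
    exact ht'mono.monotone (by simp [Fin.le_def])
  have ha0 : 0 ≤ a := by
    have := hbmin a hga
    linarith
  have htmin : ∀ x, (H (m+1)).eval x = 0 → t ⟨0, hpos⟩ ≤ x := by
    intro x hx
    obtain ⟨i, rfl⟩ := (htzero x).1 hx
    exact htmono.monotone (by simp [Fin.le_def])
  have gpos : ∀ x, a < x → 0 < (H m).eval x := by
    apply H_pos_of_no_zero m hm
    intro x hx h0
    have := hbmin (-x) (by rw [pev, h0])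
    linarith
  have fneg : ∀ x, x < t ⟨0, hpos⟩ → (H (m+1)).eval x < 0 := by
    intro x hx
    have := H_pos_of_no_zero (m+1) hpos (-t ⟨0, hpos⟩) (fun x hx h0 => by
      have := htmin (-x) (by rw [podd, h0, neg_zero])
      linarith) (-x) (by linarith)
    rw [podd] at this
    linarith
  have hf : ∀ x, HasDerivAt (fun x => (H (m+1)).eval x) (2 * (m+1) * (H m).eval x) x := by
    intro x
    have := (H (m+1)).hasDerivAt x
    rw [(H_deriv_aux m).1] at this
    simpa using this
  have hg : ∀ x, HasDerivAt (fun x => (H m).eval x) (2 * x * (H m).eval x - (H (m+1)).eval x) x := by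
    intro x
    have := (H m).hasDerivAt x
    rw [(H_deriv_aux m).2] at this
    simpa using this
  have fmono : StrictMonoOn (fun x => (H (m+1)).eval x) (Set.Ici a) := by
    apply strictMonoOn_of_deriv_pos (convex_Ici a) (H (m+1)).continuous.continuousOn
    intro x hx
    rw [interior_Ici] at hx
    rw [(hf x).deriv]
    have := gpos x hx
    positivity
  have Fmono : MonotoneOn (fun x => (H (m+1)).eval x ^ 2 + 2 * (m+1) * (H m).eval x ^ 2)
      (Set.Ici (0:ℝ)) := by
    have hF : ∀ x, HasDerivAt (fun x => (H (m+1)).eval x ^ 2 + 2 * (m+1) * (H m).eval x ^ 2)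
        (8 * (m+1) * x * (H m).eval x ^ 2) x := by
      intro x
      have := ((hf x).pow 2).add (((hg x).pow 2).const_mul (2 * (m+1) : ℝ))
      refine this.congr_deriv ?_
      push_cast
      ring
    apply monotoneOn_of_deriv_nonneg (convex_Ici 0)
    · exact fun x _ => (hF x).continuousAt.continuousWithinAt
    · exact fun x _ => (hF x).differentiableAt.differentiableWithinAt
    · intro x hx
      rw [interior_Ici] at hx
      rw [(hF x).deriv]
      have : (0:ℝ) < x := hx
      positivity
  have hfa : (H (m+1)).eval a = - (H (m+1)).eval b := podd b
  set M := (H (m+1)).eval b with hM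
  have hMpos : 0 < M := by
    have := fneg t₀ ht₀lt
    linarith
  have ht₀b : t₀ < b := by
    by_contra h
    have := fneg b (by linarith)
    linarith
  have hfs : (H (m+1)).eval s < -M := by
    have := fmono (show -t₀ ∈ Set.Ici a from by simp only [Set.mem_Ici]; linarith)
      (show -s ∈ Set.Ici a from by simp only [Set.mem_Ici]; linarith) (by linarith)
    simp only [podd] at this
    linarith
  have hbound : ∀ y, y ≤ a → (H (m+1)).eval y ≤ M := by
    intro y hy
    by_cases hyb : b ≤ y
    · have habs : |y| ≤ a := abs_le.2 ⟨by linarith, hy⟩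
      have h1 := Fmono (show |y| ∈ Set.Ici (0:ℝ) from abs_nonneg y) ha0 habs
      simp only [hga, hfa] at h1
      have h2 : (H (m+1)).eval |y| ^ 2 = (H (m+1)).eval y ^ 2 := by
        rcases abs_choice y with h | h <;> rw [h]
        rw [podd]; ring
      rw [h2] at h1
      have h3 : 0 ≤ 2 * ((m:ℝ)+1) * (H m).eval |y| ^ 2 := by positivity
      nlinarith
    · have := fmono (show a ∈ Set.Ici a from Set.self_mem_Ici)
        (show -y ∈ Set.Ici a from by simp only [Set.mem_Ici]; linarith) (by linarith)
      simp only [podd, hfa] at this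
      linarith
  have hpi := Real.pi_pos
  have hsin : 0 < Real.sin θ := Real.sin_pos_of_pos_of_lt_pi hθ.1 (by linarith [hθ.2])
  have hsc : Real.sin θ ≤ Real.cos θ := by
    rw [← Real.sin_pi_div_two_sub]
    apply Real.sin_le_sin_of_le_of_le_pi_div_two <;> linarith [hθ.1, hθ.2]
  have hPhi : ∀ y, Phi (m+1) θ (s, y) = 0 ↔
      (H (m+1)).eval y = Real.cos θ * (-(H (m+1)).eval s) / Real.sin θ := by
    intro y
    rw [eq_div_iff hsin.ne']
    simp only [Phi, mul_eq_zero, Real.exp_ne_zero, or_false]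
    constructor <;> intro h <;> linarith
  simp only [hPhi]
  have hc : M < Real.cos θ * (-(H (m+1)).eval s) / Real.sin θ := by
    rw [lt_div_iff₀ hsin]
    nlinarith
  generalize Real.cos θ * (-(H (m+1)).eval s) / Real.sin θ = c at hc
  obtain ⟨z, hz1, hz2⟩ := (((H_tendsto (m+1) hpos).eventually_ge_atTop c).and
    (Filter.eventually_ge_atTop a)).exists
  obtain ⟨y, hy, hyc⟩ := intermediate_value_Icc hz2
    ((H (m+1)).continuous.continuousOn (s := Set.Icc a z))
    (show c ∈ Set.Icc _ _ from ⟨by rw [hfa]; linarith, hz1⟩)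
  refine ⟨y, hyc, fun w hw => ?_⟩
  have hwa : a ≤ w := by
    by_contra h
    have := hbound w (by linarith)
    linarith
  exact fmono.injOn hwa hy.1 (hw.trans hyc.symm)
end
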